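/- Let 𝓓 = (Ω, 𝓑) be a β(i) design with parameter (v, k, d), i ≥ 2, c = k−d, b = |𝓑| and n = |S₁|. Then n·(v−k+c−2i+2)·(v−k+c−2i+3)·(v−k+c−2i+4) = b·F(v−k), where F(x) = C(x, i−2)·(p·x² + q·x + r) with p = −(i−2)·C(k, d+i−1), q = −(1/(i−1))·C(k, d+i−1)·( d³ − (k−6i+7)d² − ((5i−6)k − (i−1)(9i−11))d − (i−1)(4i−5)k + (i−1)(2i²−2i−1) ), and r = (1/(i−1))·C(k, d+i−1)·( (2i−3)d³ − (3i−4)(k−3i+4)d² + ((i−1)k² − (9i²−23i+15)k + (i−1)(12i²−33i+23))d + (i−1)²k² − (i−1)(6i²−16i+11)k + 2(2i−3)(i−1)³ ). -/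

import Mathlib

open Finset

variable {α : Type*} [Fintype α] [DecidableEq α]

/-- `𝓑` is a design on the finite type `α` of cardinality `v`, with block size `k` and
maximal pairwise block intersection size `d`. -/
def IsDesign (𝓑 : Finset (Finset α)) (v k d : ℕ) : Prop :=
  Fintype.card α = v ∧ 2 ≤ 𝓑.card ∧ d < k ∧ k < v ∧
  (∀ B ∈ 𝓑, B.card = k) ∧
  (∀ B ∈ 𝓑, ∀ C ∈ 𝓑, B ≠ C → (B ∩ C).card ≤ d) ∧
  (∃ B ∈ 𝓑, ∃ C ∈ 𝓑, B ≠ C ∧ (B ∩ C).card = d)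

/-- `𝓑` is a `β(i)` design with parameters `(v, k, d)`: a design such that
`1 ≤ i ≤ (v - d + 1)/2` and every `(d + 2i - 1)`-element subset `X` of `Ω` admits a
unique block `B` with `|X ∩ B| ≥ d + i`. -/
def IsBetaDesign (𝓑 : Finset (Finset α)) (v k d i : ℕ) : Prop :=
  IsDesign 𝓑 v k d ∧ 1 ≤ i ∧ 2 * i ≤ v - d + 1 ∧
  ∀ X : Finset α, X.card = d + 2 * i - 1 →
    ∃! B, B ∈ 𝓑 ∧ d + i ≤ (X ∩ B).card

/-- The family `S₁` of all `(d + 2(i-2))`-element subsets `X` of `Ω` such that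
`|X ∩ B| ≤ d + i - 2` for every block `B ∈ 𝓑`. -/
def S1 (𝓑 : Finset (Finset α)) (d i : ℕ) : Finset (Finset α) :=
  (Finset.univ : Finset (Finset α)).filter
    (fun X => X.card = d + 2 * (i - 2) ∧ ∀ B ∈ 𝓑, (X ∩ B).card ≤ d + i - 2)

/-!
For a threshold `s`, let `D(m)` be the number of `m`-subsets of `Ω` minus the number of pairs
`(X, B)` with `|X| = m`, `B` a block and `|X ∩ B| ≥ s`. When `m + d < 2 s`, an `m`-set meets at
most one block in `s` or more points, so `D(m)` counts the `m`-sets meeting every block in fewer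
than `s` points. Take `s = d + i - 1`: then `D(d + 2i - 4) = |S₁|`, while `D(d + 2i - 1)` is known,
because raising the threshold to `s + 1 = d + i` gives `0` by the `β(i)` property. The absorption
identity `(m + 1) C(v, m + 1) = (v - m) C(v, m)` has an analogue with a correction term for the sets
meeting `B` in at least `s` points, hence `D` satisfies a first-order recurrence in `m`; three steps
of it link the two values.
-/

theorem succ_mul_cast_choose_succ {R : Type*} [CommRing R] (n j : ℕ) :
    ((j : R) + 1) * (n.choose (j + 1) : R) = ((n : R) - j) * (n.choose j : R) := by
  rcases le_or_gt j n with hjn | hnj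
  · have absorption := congrArg (Nat.cast : ℕ → R) (Nat.choose_succ_right_eq n j)
    push_cast [Nat.cast_sub hjn] at absorption
    linear_combination absorption
  · simp [Nat.choose_eq_zero_of_lt hnj, Nat.choose_eq_zero_of_lt (Nat.lt_succ_of_lt hnj)]

theorem card_powersetCard_union_filter_card_inter {β : Type*} [DecidableEq β] {A C : Finset β}
    (hAC : Disjoint A C) (s t : ℕ) :
    #{X ∈ (A ∪ C).powersetCard (s + t) | #(X ∩ A) = s} = (#A).choose s * (#C).choose t := by
  rw [← card_powersetCard, ← card_powersetCard, ← card_product]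
  have union_inter {P Q : Finset β} (hP : P ⊆ A) (hQ : Q ⊆ C) :
      (P ∪ Q) ∩ A = P ∧ (P ∪ Q) ∩ C = Q := by
    simp [union_inter_distrib_right, inter_eq_left.2 hP, inter_eq_left.2 hQ,
      disjoint_iff_inter_eq_empty.1 (hAC.mono_left hP),
      disjoint_iff_inter_eq_empty.1 (hAC.symm.mono_left hQ)]
  refine card_nbij' (fun X ↦ (X ∩ A, X ∩ C)) (fun P ↦ P.1 ∪ P.2) ?_ ?_ ?_ ?_
  · intro X hX
    simp only [mem_coe, mem_filter, mem_powersetCard] at hX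
    obtain ⟨⟨hXAC, hcard⟩, hXA⟩ := hX
    have hparts : #X = #(X ∩ A) + #(X ∩ C) := by
      rw [← card_union_of_disjoint (hAC.mono inter_subset_right inter_subset_right),
        ← inter_union_distrib_left, inter_eq_left.2 hXAC]
    simp only [mem_coe, mem_product, mem_powersetCard]
    exact ⟨⟨inter_subset_right, hXA⟩, inter_subset_right, by omega⟩
  · rintro ⟨P, Q⟩ hPQ
    simp only [mem_coe, mem_product, mem_powersetCard] at hPQ
    obtain ⟨⟨hPA, hP⟩, hQC, hQ⟩ := hPQ
    simp only [mem_coe, mem_filter, mem_powersetCard, (union_inter hPA hQC).1]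
    exact ⟨⟨union_subset_union hPA hQC,
      by rw [card_union_of_disjoint (hAC.mono hPA hQC), hP, hQ]⟩, hP⟩
  · intro X hX
    simp only [mem_coe, mem_filter, mem_powersetCard] at hX
    exact (inter_union_distrib_left X A C).symm.trans (inter_eq_left.2 hX.1.1)
  · rintro ⟨P, Q⟩ hPQ
    simp only [mem_coe, mem_product, mem_powersetCard] at hPQ
    exact Prod.ext_iff.2 (union_inter hPQ.1.1 hPQ.2.1)

/-- The `m`-element sets meeting `B` in at least `s` points: the sets that the block `B` covers
in the `β(i)` condition, for `m = d + 2 i - 1` and `s = d + i`. -/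
def largeMeet (B : Finset α) (m s : ℕ) : Finset (Finset α) :=
  {X ∈ univ.powersetCard m | s ≤ #(X ∩ B)}

theorem mem_largeMeet {B X : Finset α} {m s : ℕ} :
    X ∈ largeMeet B m s ↔ #X = m ∧ s ≤ #(X ∩ B) := by
  simp [largeMeet]

theorem largeMeet_eq_empty (B : Finset α) {m s : ℕ} (hms : m < s) : largeMeet B m s = ∅ := by
  refine eq_empty_of_forall_notMem fun X hX ↦ ?_
  have hle : #(X ∩ B) ≤ #X := card_le_card inter_subset_left
  rw [mem_largeMeet] at hX
  omega

theorem card_largeMeet_eq_add (B : Finset α) (s t : ℕ) :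
    #(largeMeet B (s + t) s) =
      (#B).choose s * (#Bᶜ).choose t + #(largeMeet B (s + t) (s + 1)) := by
  rw [← card_powersetCard_union_filter_card_inter disjoint_compl_right, union_compl,
    add_comm #{X ∈ _ | _},
    ← card_filter_add_card_filter_not (s := largeMeet B (s + t) s) (fun X ↦ s + 1 ≤ #(X ∩ B))]
  congr 2 <;> ext X <;> simp only [mem_filter, mem_largeMeet, mem_powersetCard_univ] <;> omega

theorem succ_mul_card_largeMeet (B : Finset α) {m s t : ℕ} (hm : m + 1 = s + t) :
    ((m : ℤ) + 1) * #(largeMeet B (m + 1) s) =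
      (Fintype.card α - m) * #(largeMeet B m s) + s * ((#B).choose s * (#Bᶜ).choose t) := by
  induction t generalizing s with
  | zero =>
    obtain rfl : s = m + 1 := hm.symm
    have full := card_largeMeet_eq_add B (m + 1) 0
    rw [add_zero, largeMeet_eq_empty B (m + 1).lt_succ_self] at full
    rw [full, largeMeet_eq_empty B m.lt_succ_self]
    simp
  | succ t ih =>
    obtain rfl : m = s + t := by omega
    have next := ih (s := s + 1) (by omega)
    have inside := succ_mul_cast_choose_succ (R := ℤ) (#B) s
    have outside := succ_mul_cast_choose_succ (R := ℤ) (#Bᶜ) t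
    have complement : (#B : ℤ) + #Bᶜ = Fintype.card α := mod_cast card_add_card_compl B
    rw [add_assoc s t 1, card_largeMeet_eq_add, card_largeMeet_eq_add, ← add_assoc]
    push_cast at next ⊢
    rw [← complement] at next ⊢
    linear_combination next + ((#B).choose s : ℤ) * outside + ((#Bᶜ).choose t : ℤ) * inside

/-- The number of `m`-element sets minus the number of pairs `(X, B)` in which `X` is an
`m`-element set meeting the block `B` in at least `s` points. It is integer-valued because
a set may be counted once for each of several blocks, which can make it negative. -/
def coverDefect (𝓑 : Finset (Finset α)) (s m : ℕ) : ℤ :=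
  (Fintype.card α).choose m - ∑ B ∈ 𝓑, (#(largeMeet B m s) : ℤ)

section Uniform

variable {𝓑 : Finset (Finset α)} {k : ℕ}

theorem coverDefect_threshold_succ (hk : ∀ B ∈ 𝓑, #B = k) (s t : ℕ) :
    coverDefect 𝓑 (s + 1) (s + t) =
      coverDefect 𝓑 s (s + t) + #𝓑 * (k.choose s * (Fintype.card α - k).choose t) := by
  have split : ∀ B ∈ 𝓑, (#(largeMeet B (s + t) s) : ℤ) =
      k.choose s * (Fintype.card α - k).choose t + #(largeMeet B (s + t) (s + 1)) := by
    intro B hB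
    rw [card_largeMeet_eq_add, card_compl, hk B hB]
    push_cast
    rfl
  rw [coverDefect, coverDefect, sum_congr rfl split, sum_add_distrib, sum_const, nsmul_eq_mul]
  ring

theorem succ_mul_coverDefect_succ (hk : ∀ B ∈ 𝓑, #B = k) {m s t : ℕ} (hm : m + 1 = s + t) :
    ((m : ℤ) + 1) * coverDefect 𝓑 s (m + 1) =
      (Fintype.card α - m) * coverDefect 𝓑 s m
        - #𝓑 * (s * (k.choose s * (Fintype.card α - k).choose t)) := by
  have absorb : ∀ B ∈ 𝓑, ((m : ℤ) + 1) * #(largeMeet B (m + 1) s) =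
      (Fintype.card α - m) * #(largeMeet B m s)
        + s * (k.choose s * (Fintype.card α - k).choose t) := by
    intro B hB
    rw [succ_mul_card_largeMeet B hm, card_compl, hk B hB]
  rw [coverDefect, coverDefect, mul_sub, mul_sub, mul_sum, mul_sum, sum_congr rfl absorb,
    sum_add_distrib, sum_const, nsmul_eq_mul, succ_mul_cast_choose_succ]
  ring

theorem coverDefect_add_three (hk : ∀ B ∈ 𝓑, #B = k) {m s t : ℕ} (hm : m + 1 = s + t) :
    ((m : ℤ) + 1) * (m + 2) * (m + 3) * coverDefect 𝓑 s (m + 3) =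
      (Fintype.card α - m) * (Fintype.card α - m - 1) * (Fintype.card α - m - 2) *
          coverDefect 𝓑 s m
        - #𝓑 * (s * k.choose s *
          ((Fintype.card α - m - 1) * (Fintype.card α - m - 2) * (Fintype.card α - k).choose t
            + (m + 1) * (Fintype.card α - m - 2) * (Fintype.card α - k).choose (t + 1)
            + (m + 1) * (m + 2) * (Fintype.card α - k).choose (t + 2))) := by
  have step₀ := succ_mul_coverDefect_succ hk hm
  have step₁ := succ_mul_coverDefect_succ hk (m := m + 1) (s := s) (t := t + 1) (by omega)
  have step₂ := succ_mul_coverDefect_succ hk (m := m + 2) (s := s) (t := t + 2) (by omega)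
  push_cast at step₁ step₂
  linear_combination (Fintype.card α - m - 1 : ℤ) * (Fintype.card α - m - 2) * step₀
    + (m + 1 : ℤ) * (Fintype.card α - m - 2) * step₁ + (m + 1 : ℤ) * (m + 2) * step₂

end Uniform

section Packing

variable {𝓑 : Finset (Finset α)} {d m s : ℕ}

theorem pairwiseDisjoint_largeMeet (hd : (𝓑 : Set (Finset α)).Pairwise fun B C ↦ #(B ∩ C) ≤ d)
    (hms : m + d < 2 * s) :
    (𝓑 : Set (Finset α)).PairwiseDisjoint fun B ↦ largeMeet B m s := by
  intro B hB C hC hBC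
  rw [Function.onFun, Finset.disjoint_left]
  intro X hXB hXC
  rw [mem_largeMeet] at hXB hXC
  have hunion : #(X ∩ B ∪ X ∩ C) ≤ #X :=
    card_le_card (union_subset inter_subset_left inter_subset_left)
  have hinter : #(X ∩ B ∩ (X ∩ C)) ≤ #(B ∩ C) :=
    card_le_card (inter_subset_inter inter_subset_right inter_subset_right)
  have hsum := card_union_add_card_inter (X ∩ B) (X ∩ C)
  have hBCd : #(B ∩ C) ≤ d := hd hB hC hBC
  omega

theorem coverDefect_eq_card (hd : (𝓑 : Set (Finset α)).Pairwise fun B C ↦ #(B ∩ C) ≤ d)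
    (hms : m + d < 2 * s) :
    coverDefect 𝓑 s m = #{X ∈ univ.powersetCard m | ∀ B ∈ 𝓑, #(X ∩ B) < s} := by
  have hcompl : {X ∈ (univ : Finset α).powersetCard m | ¬∀ B ∈ 𝓑, #(X ∩ B) < s} =
      𝓑.biUnion fun B ↦ largeMeet B m s := by
    ext X
    simp only [mem_filter, mem_powersetCard_univ, mem_biUnion, mem_largeMeet]
    push Not
    exact ⟨fun ⟨hX, B, hB, hle⟩ ↦ ⟨B, hB, hX, hle⟩, fun ⟨B, hB, hX, hle⟩ ↦ ⟨hX, B, hB, hle⟩⟩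
  have hsplit := card_filter_add_card_filter_not (s := (univ : Finset α).powersetCard m)
    (fun X ↦ ∀ B ∈ 𝓑, #(X ∩ B) < s)
  rw [hcompl, card_biUnion (pairwiseDisjoint_largeMeet hd hms), card_powersetCard,
    card_univ] at hsplit
  rw [coverDefect, ← hsplit]
  push_cast
  ring

end Packing

namespace IsBetaDesign

variable {𝓑 : Finset (Finset α)} {v k d i : ℕ}

theorem coverDefect_eq_zero (hB : IsBetaDesign 𝓑 v k d i) :
    coverDefect 𝓑 (d + i) (d + 2 * i - 1) = 0 := by
  obtain ⟨⟨-, -, -, -, -, hd, -⟩, hi, -, hcover⟩ := hB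
  rw [coverDefect_eq_card (fun _ hP _ hQ ↦ hd _ hP _ hQ) (by omega), Nat.cast_eq_zero,
    card_eq_zero, filter_eq_empty_iff]
  intro X hX hlt
  obtain ⟨B, ⟨hmem, hle⟩, -⟩ := hcover X (mem_powersetCard_univ.1 hX)
  exact (hlt B hmem).not_ge hle

theorem coverDefect_eq_card_S1 (hB : IsBetaDesign 𝓑 v k d i) (hi : 2 ≤ i) :
    coverDefect 𝓑 (d + i - 1) (d + 2 * (i - 2)) = #(S1 𝓑 d i) := by
  obtain ⟨⟨-, -, -, -, -, hd, -⟩, -⟩ := hB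
  rw [coverDefect_eq_card (fun _ hP _ hQ ↦ hd _ hP _ hQ) (by omega)]
  congr 2
  ext X
  have hlt (B : Finset α) : #(X ∩ B) < d + i - 1 ↔ #(X ∩ B) ≤ d + i - 2 := by omega
  simp only [S1, mem_filter, mem_powersetCard_univ, mem_univ, true_and, hlt]

theorem card_S1_mul {N : ℕ} (hB : IsBetaDesign 𝓑 v k d (N + 2)) :
    ((N : ℤ) + 1) * #(S1 𝓑 d (N + 2)) *
        ((v - d - 2 * N) * (v - d - 2 * N - 1) * (v - d - 2 * N - 2)) =
      #𝓑 * k.choose (d + N + 1) * (v - k).choose N *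
        ((N + 1) * (d + N + 1) * (v - d - 2 * N - 1) * (v - d - 2 * N - 2)
          + (d + 2 * N + 1) * (v - k - N) *
            ((d + N + 1) * (v - d - 2 * N - 2) - (d + 2 * N + 2) * (v - k - N - 1))) := by
  have initial : coverDefect 𝓑 (d + N + 1) (d + 2 * N) = #(S1 𝓑 d (N + 2)) :=
    hB.coverDefect_eq_card_S1 (by omega)
  have terminal : coverDefect 𝓑 (d + N + 2) (d + 2 * N + 3) = 0 := hB.coverDefect_eq_zero
  obtain ⟨⟨hv, -, -, hkv, hk, -⟩, -⟩ := hB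
  have hx : ((v - k : ℕ) : ℤ) = v - k := Nat.cast_sub hkv.le
  have unrolled := coverDefect_add_three hk (show d + 2 * N + 1 = d + N + 1 + N by omega)
  have threshold := coverDefect_threshold_succ hk (d + N + 1) (N + 2)
  rw [show d + N + 1 + (N + 2) = d + 2 * N + 3 by omega, terminal] at threshold
  rw [initial] at unrolled
  have choose₁ := succ_mul_cast_choose_succ (R := ℤ) (v - k) N
  have choose₂ := succ_mul_cast_choose_succ (R := ℤ) (v - k) (N + 1)
  rw [hv] at threshold unrolled
  rw [hx] at choose₁ choose₂
  push_cast at unrolled choose₂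
  linear_combination
    -(N + 1) * ((d : ℤ) + 2 * N + 1) * (d + 2 * N + 2) * (d + 2 * N + 3) * threshold
      - ((N : ℤ) + 1) * unrolled
      - #𝓑 * k.choose (d + N + 1) * (N + 1) * ((d : ℤ) + 2 * N + 1) * (d + 2 * N + 2) * choose₂
      + #𝓑 * k.choose (d + N + 1) * (d + 2 * N + 1)
        * ((d + N + 1) * (v - d - 2 * N - 2) - (d + 2 * N + 2) * ((v : ℤ) - k - N - 1)) * choose₁

end IsBetaDesign

/-- **Proposition 5.4.** Let `𝓑` be a `β(i)` design with parameter `(v, k, d)`, `i ≥ 2`,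
`c = k - d`, `b = |𝓑|`, `n = |S₁|`.  Then
`n = b F(v-k) / ((v-k+c-2i+2)(v-k+c-2i+3)(v-k+c-2i+4))`, where
`F(x) = C(x, i-2) (p x² + q x + r)` with `p, q, r` as below. -/
theorem prop5_4 (𝓑 : Finset (Finset α)) (v k d i c : ℕ)
    (hB : IsBetaDesign 𝓑 v k d i) (hi : 2 ≤ i) (hc : c = k - d)
    (n : ℕ) (hn : n = (S1 𝓑 d i).card)
    (p q r : ℝ)
    (hp : p = -((i : ℝ) - 2) * (k.choose (d + i - 1) : ℝ))
    (hq : q = -(1 / ((i : ℝ) - 1)) * (k.choose (d + i - 1) : ℝ) *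
      ((d : ℝ) ^ 3 - ((k : ℝ) - 6 * (i : ℝ) + 7) * (d : ℝ) ^ 2
        - ((5 * (i : ℝ) - 6) * (k : ℝ) - ((i : ℝ) - 1) * (9 * (i : ℝ) - 11)) * (d : ℝ)
        - ((i : ℝ) - 1) * (4 * (i : ℝ) - 5) * (k : ℝ)
        + ((i : ℝ) - 1) * (2 * (i : ℝ) ^ 2 - 2 * (i : ℝ) - 1)))
    (hr : r = (1 / ((i : ℝ) - 1)) * (k.choose (d + i - 1) : ℝ) *
      ((2 * (i : ℝ) - 3) * (d : ℝ) ^ 3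
        - (3 * (i : ℝ) - 4) * ((k : ℝ) - 3 * (i : ℝ) + 4) * (d : ℝ) ^ 2
        + (((i : ℝ) - 1) * (k : ℝ) ^ 2 - (9 * (i : ℝ) ^ 2 - 23 * (i : ℝ) + 15) * (k : ℝ)
            + ((i : ℝ) - 1) * (12 * (i : ℝ) ^ 2 - 33 * (i : ℝ) + 23)) * (d : ℝ)
        + ((i : ℝ) - 1) ^ 2 * (k : ℝ) ^ 2
        - ((i : ℝ) - 1) * (6 * (i : ℝ) ^ 2 - 16 * (i : ℝ) + 11) * (k : ℝ)
        + 2 * (2 * (i : ℝ) - 3) * ((i : ℝ) - 1) ^ 3)) :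
    (n : ℝ) * (((v : ℝ) - (k : ℝ) + (c : ℝ) - 2 * (i : ℝ) + 2)
        * ((v : ℝ) - (k : ℝ) + (c : ℝ) - 2 * (i : ℝ) + 3)
        * ((v : ℝ) - (k : ℝ) + (c : ℝ) - 2 * (i : ℝ) + 4)) =
      (𝓑.card : ℝ) * (((v - k).choose (i - 2) : ℝ)
        * (p * ((v : ℝ) - (k : ℝ)) ^ 2 + q * ((v : ℝ) - (k : ℝ)) + r)) := by
  obtain ⟨N, rfl⟩ : ∃ N, i = N + 2 := Nat.exists_eq_add_of_le' hi
  have count := congrArg (Int.cast : ℤ → ℝ) hB.card_S1_mul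
  obtain ⟨⟨-, -, hdk, -⟩, -⟩ := hB
  have hcast : (c : ℝ) = k - d := by rw [hc, Nat.cast_sub hdk.le]
  have hN : (N : ℝ) + 2 - 1 ≠ 0 := by
    rw [add_sub_assoc]
    positivity
  subst hn hp hq hr
  rw [hcast, show d + (N + 2) - 1 = d + N + 1 by omega, Nat.add_sub_cancel]
  push_cast at count hN ⊢
  field_simp
  linear_combination count
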